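/- For any μ ≥ 1, σ > 0, and integer m ≥ 0, the m-th moment s_{m,σ,μ} = ∫_{-1}^{1} t^m g̃_{σ,μ}(t) dt satisfies: s_{m,σ,μ} = 0 if m is odd, and s_{2k,σ,μ} = γ^mod((2k+2μ-1)/(2(2μ-1)), 1/(2σ^{4μ-2})) / γ^mod(1/2, 1/(2σ^{4μ-2})) if m = 2k is even. -/

import Mathlib

open MeasureTheory

/-- Lower incomplete gamma function `γ(s,z) = ∫₀^z u^(s-1) e^(-u) du`. -/
noncomputable def lowGamma (s z : ℝ) : ℝ := ∫ u in (0:ℝ)..z, u ^ (s - 1) * Real.exp (-u)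

/-- Modified lower incomplete gamma function `γ^mod(s,z) = γ(s,z)/z^s`. -/
noncomputable def gammaMod (s z : ℝ) : ℝ := lowGamma s z / z ^ s

/-- Second family of densities `g̃_{σ,μ}` on `[-1,1]`. -/
noncomputable def gTilde (σ μ t : ℝ) : ℝ :=
  ((2 * μ - 1) / gammaMod (1 / 2) (1 / (2 * σ ^ (4 * μ - 2)))) *
    (t ^ 2) ^ (μ - 1) * Real.exp (-(1 / 2) * (t ^ 2 / σ ^ 2) ^ (2 * μ - 1))

lemma gammaMod_eq_aux (s p z : ℝ) (hp : 0 < p) (hz : 0 < z) :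
    gammaMod s z = p * ∫ t in (0:ℝ)..1, t ^ (p * s - 1) * Real.exp (-(z * t ^ p)) := by
  have key : ∫ t in (0:ℝ)..1, ((fun u : ℝ => u ^ (s - 1) * Real.exp (-u)) ∘ (fun t : ℝ => z * t ^ p)) t * (z * (p * t ^ (p - 1)))
      = ∫ u in (z * (0:ℝ) ^ p)..(z * (1:ℝ) ^ p), u ^ (s - 1) * Real.exp (-u) := by
    apply intervalIntegral.integral_comp_mul_deriv_of_deriv_nonneg
    · exact (continuous_const.mul (Real.continuous_rpow_const hp.le)).continuousOn
    · intro x hx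
      simp only [zero_le_one, min_eq_left, max_eq_right, Set.mem_Ioo] at hx
      exact (Real.hasDerivAt_rpow_const (Or.inl hx.1.ne')).const_mul z
    · intro x hx
      simp only [zero_le_one, min_eq_left, max_eq_right, Set.mem_Ioo] at hx
      have := hx.1
      positivity
  rw [Real.zero_rpow hp.ne', Real.one_rpow, mul_zero, mul_one] at key
  rw [gammaMod, lowGamma, ← key, div_eq_iff (by positivity), mul_right_comm,
    ← intervalIntegral.integral_const_mul]
  apply intervalIntegral.integral_congr_Ioo_of_le zero_le_one
  intro t ht
  have ht0 := ht.1
  simp only [Function.comp]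
  have h1 : (z * t ^ p) ^ (s - 1) = z ^ s / z * t ^ (p * (s - 1)) := by
    rw [Real.mul_rpow hz.le (by positivity), Real.rpow_sub_one hz.ne', Real.rpow_mul ht0.le]
  have h2 : t ^ (p * s - 1) = t ^ (p * (s - 1)) * t ^ (p - 1) := by
    rw [← Real.rpow_add ht0]; ring_nf
  rw [h1, h2]
  field_simp

lemma gTilde_even (σ μ t : ℝ) : gTilde σ μ (-t) = gTilde σ μ t := by
  simp [gTilde]

lemma gTilde_cont (σ μ : ℝ) (hμ : 1 ≤ μ) : Continuous (gTilde σ μ) := by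
  unfold gTilde
  have h1 : Continuous fun t : ℝ => (t ^ 2) ^ (μ - 1) :=
    (continuous_pow 2).rpow_const (fun _ => Or.inr (by linarith))
  have h2 : Continuous fun t : ℝ => (t ^ 2 / σ ^ 2) ^ (2 * μ - 1) :=
    ((continuous_pow 2).div_const _).rpow_const (fun _ => Or.inr (by linarith))
  exact (continuous_const.mul h1).mul (Real.continuous_exp.comp (continuous_const.mul h2))

/-- Moments of `g̃_{σ,μ}`: the odd moments vanish and the even moments are
ratios of modified incomplete gamma functions. -/
theorem gTilde_moments (σ μ : ℝ) (hσ : 0 < σ) (hμ : 1 ≤ μ) (m : ℕ) :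
    (Odd m → ∫ t in (-1:ℝ)..1, t ^ m * gTilde σ μ t = 0) ∧
    (∀ k : ℕ, m = 2 * k →
      ∫ t in (-1:ℝ)..1, t ^ m * gTilde σ μ t
        = gammaMod ((2 * (k:ℝ) + 2 * μ - 1) / (2 * (2 * μ - 1))) (1 / (2 * σ ^ (4 * μ - 2)))
          / gammaMod (1 / 2) (1 / (2 * σ ^ (4 * μ - 2)))) := by
  constructor
  · intro hm
    have h := intervalIntegral.integral_comp_neg (a := -1) (b := 1)
      (fun t : ℝ => t ^ m * gTilde σ μ t)
    simp only [gTilde_even, hm.neg_pow, neg_mul, intervalIntegral.integral_neg, neg_neg] at h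
    linarith
  · rintro k rfl
    have hc : Continuous fun t : ℝ => t ^ (2 * k) * gTilde σ μ t :=
      (continuous_pow _).mul (gTilde_cont σ μ hμ)
    have h := intervalIntegral.integral_comp_neg (a := 0) (b := 1)
      (fun t : ℝ => t ^ (2 * k) * gTilde σ μ t)
    simp only [gTilde_even, (even_two_mul k).neg_pow, neg_zero] at h
    rw [← intervalIntegral.integral_add_adjacent_intervals (hc.intervalIntegrable (-1) 0)
      (hc.intervalIntegrable 0 1), ← h, ← two_mul]
    have hp : 0 < 4 * μ - 2 := by linarith
    rw [gammaMod_eq_aux ((2 * (k:ℝ) + 2 * μ - 1) / (2 * (2 * μ - 1))) (4 * μ - 2)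
      (1 / (2 * σ ^ (4 * μ - 2))) hp (by positivity)]
    rw [mul_div_right_comm, ← intervalIntegral.integral_const_mul,
      ← intervalIntegral.integral_const_mul]
    apply intervalIntegral.integral_congr_Ioo_of_le zero_le_one
    intro t ht
    have ht0 := ht.1
    have e1 : (4 * μ - 2) * ((2 * (k:ℝ) + 2 * μ - 1) / (2 * (2 * μ - 1))) - 1
        = ((2 * k : ℕ) : ℝ) + 2 * (μ - 1) := by
      have : 2 * μ - 1 ≠ 0 := by linarith
      rw [show 4 * μ - 2 = 2 * (2 * μ - 1) by ring,
        mul_div_cancel₀ _ (mul_ne_zero two_ne_zero this)]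
      push_cast
      ring
    have e2 : (t ^ 2) ^ (μ - 1) = t ^ (2 * (μ - 1)) := by
      rw [Real.rpow_mul ht0.le, Real.rpow_two]
    have e3 : ∀ x : ℝ, 0 < x → (x ^ 2) ^ (2 * μ - 1) = x ^ (4 * μ - 2) := by
      intro x hx
      rw [← Real.rpow_two, ← Real.rpow_mul hx.le]; ring_nf
    have e4 : -(1 / 2) * (t ^ 2 / σ ^ 2) ^ (2 * μ - 1)
        = -(1 / (2 * σ ^ (4 * μ - 2)) * t ^ (4 * μ - 2)) := by
      rw [Real.div_rpow (by positivity) (by positivity), e3 t ht0, e3 σ hσ]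
      field_simp
    simp only [gTilde]
    rw [e1, e2, e4, Real.rpow_add ht0, Real.rpow_natCast]
    ring
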